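/- Let M, A ∈ ℕ with M ≥ 1, let f be an (M,A)-quasi-isometry from a connected graph G to a connected graph H, let W ⊆ V(H) be connected, and for every w ∈ W let u_w ∈ V(G) be a vertex with d_H(f(u_w), w) ≤ A. Then B_G(U, M(3A+1)) is connected, where U := {u_w : w ∈ W}. -/

import Mathlib

open SimpleGraph

namespace CGT

/-- Distance between two vertex sets, as an extended natural number. -/
noncomputable def sDist {V : Type*} (G : SimpleGraph V) (U U' : Set V) : ℕ∞ :=
  ⨅ (u : U) (v : U'), G.edist u.1 v.1

/-- The ball of radius `r` around a vertex set `U`. -/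
def gBall {V : Type*} (G : SimpleGraph V) (U : Set V) (r : ℕ) : Set V :=
  {v | ∃ u ∈ U, G.edist u v ≤ (r : ℕ∞)}

/-- A set of vertices is connected if the induced subgraph is connected. -/
def SetConn {V : Type*} (G : SimpleGraph V) (U : Set V) : Prop :=
  (G.induce U).Connected

/-- The vertex set of a walk. -/
def walkSupp {V : Type*} {G : SimpleGraph V} {a b : V} (p : G.Walk a b) : Set V :=
  {v | v ∈ p.support}

/-- `X` separates `Y` and `Z` in `G`: every path with one end in `Y` and one in `Z`
contains a vertex of `X`. -/
def Separates {V : Type*} (G : SimpleGraph V) (X Y Z : Set V) : Prop :=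
  ∀ ⦃y z : V⦄, y ∈ Y → z ∈ Z → ∀ p : G.Walk y z, p.IsPath → ∃ x ∈ X, x ∈ p.support

/-- `f` is an `(M,A)`-quasi-isometry from `G` to `H`.  The two-sided distance bound
`M⁻¹ d_G(u,v) - A ≤ d_H(f u, f v) ≤ M d_G(u,v) + A` is stated multiplied out over `ℕ∞`. -/
structure IsQI {V V' : Type*} (M A : ℕ) (G : SimpleGraph V) (H : SimpleGraph V')
    (f : V → V') : Prop where
  upper : ∀ u v : V, H.edist (f u) (f v) ≤ (M : ℕ∞) * G.edist u v + (A : ℕ∞)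
  lower : ∀ u v : V, G.edist u v ≤ (M : ℕ∞) * H.edist (f u) (f v) + (M : ℕ∞) * (A : ℕ∞)
  dense : ∀ w : V', ∃ v : V, H.edist w (f v) ≤ (A : ℕ∞)

/-- `G` is `(M,A)`-quasi-isometric to `H`. -/
def QIsometric {V V' : Type*} (M A : ℕ) (G : SimpleGraph V) (H : SimpleGraph V') : Prop :=
  ∃ f : V → V', IsQI M A G H f

/-- `X` is a minor of `G`. -/
def HasMinor {V W : Type*} (G : SimpleGraph V) (X : SimpleGraph W) : Prop :=
  ∃ U : W → Set V,
    (∀ x, (U x).Nonempty) ∧ (∀ x, SetConn G (U x)) ∧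
    (∀ ⦃x y⦄, x ≠ y → Disjoint (U x) (U y)) ∧
    ∀ ⦃x y⦄, X.Adj x y → ∃ u ∈ U x, ∃ v ∈ U y, G.Adj u v

/-- The `(a × b)`-grid graph. -/
def gridGraph (a b : ℕ) : SimpleGraph (Fin a × Fin b) :=
  SimpleGraph.fromRel (fun u v =>
    (u.1 = v.1 ∧ u.2.1 + 1 = v.2.1) ∨ (u.2 = v.2 ∧ u.1.1 + 1 = v.1.1))

/-- A `K`-fat model of `X` in `G`: disjoint connected branch sets joined by internally
disjoint branch paths, all pairwise at distance at least `K` except for a branch path and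
the branch sets of its endpoints. -/
structure FatModel {V W : Type*} (G : SimpleGraph V) (X : SimpleGraph W) (K : ℕ) where
  branch : W → Set V
  branch_nonempty : ∀ x, (branch x).Nonempty
  branch_connected : ∀ x, SetConn G (branch x)
  branch_disjoint : ∀ ⦃x y⦄, x ≠ y → Disjoint (branch x) (branch y)
  pathEnd : ∀ ⦃x y⦄, X.Adj x y → V
  path : ∀ ⦃x y⦄ (e : X.Adj x y), G.Walk (pathEnd e) (pathEnd e.symm)
  path_isPath : ∀ ⦃x y⦄ (e : X.Adj x y), (path e).IsPath
  path_symm : ∀ ⦃x y⦄ (e : X.Adj x y), path e.symm = (path e).reverse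
  pathEnd_mem : ∀ ⦃x y⦄ (e : X.Adj x y), pathEnd e ∈ branch x
  path_meets : ∀ ⦃x y⦄ (e : X.Adj x y) (z : W) (v : V), v ∈ (path e).support → v ∈ branch z →
    (z = x ∧ v = pathEnd e) ∨ (z = y ∧ v = pathEnd e.symm)
  path_int_disjoint : ∀ ⦃x y x' y'⦄ (e : X.Adj x y) (e' : X.Adj x' y'), s(x, y) ≠ s(x', y') →
    ∀ v, v ∈ (path e).support → v ∈ (path e').support → v = pathEnd e' ∨ v = pathEnd e'.symm
  fat_branch : ∀ ⦃x y⦄, x ≠ y → (K : ℕ∞) ≤ sDist G (branch x) (branch y)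
  fat_path_branch : ∀ ⦃x y⦄ (e : X.Adj x y) (z : W), z ≠ x → z ≠ y →
    (K : ℕ∞) ≤ sDist G (walkSupp (path e)) (branch z)
  fat_paths : ∀ ⦃x y x' y'⦄ (e : X.Adj x y) (e' : X.Adj x' y'), s(x, y) ≠ s(x', y') →
    (K : ℕ∞) ≤ sDist G (walkSupp (path e)) (walkSupp (path e'))

/-- `X` is a `K`-fat minor of `G`. -/
def IsFatMinor {V W : Type*} (G : SimpleGraph V) (X : SimpleGraph W) (K : ℕ) : Prop :=
  Nonempty (FatModel G X K)

/-- `W` is a `K`-fat `n`-path-connected set in `G`. -/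
def FatPathConn {V : Type*} (G : SimpleGraph V) (K n : ℕ) (W : Set V) : Prop :=
  (∃ S : Finset V, ↑S ⊆ W ∧ 2 * n ≤ S.card) ∧
  (∀ ⦃u v : V⦄, u ∈ W → v ∈ W → u ≠ v → (K : ℕ∞) ≤ G.edist u v) ∧
  ∀ l : ℕ, l ≤ n → ∀ A B : Finset V, ↑A ⊆ W → ↑B ⊆ W → A.card = l → B.card = l →
    ∃ (a b : Fin l → V) (P : ∀ i : Fin l, G.Walk (a i) (b i)),
      (∀ i, (P i).IsPath) ∧ (∀ i, a i ∈ A ∧ b i ∈ B) ∧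
      ∀ i j, i ≠ j → (K : ℕ∞) ≤ sDist G (walkSupp (P i)) (walkSupp (P j))

end CGT

namespace Ghdm

/-- Raw vertex codes for the graphs `G_{h,d,m}`:
`path k` is the `k`-th vertex of the base path; `tree j i p` is the vertex at position `p`
of the `i`-th binary tree at level `j` (the root being position `[]`); and
`spine j i k t e s` is the `s`-th internal vertex of the spine from the `k`-th leaf of that
tree to the `e`-th element of the `t`-th local gluing set at level `j-1`. -/
inductive Raw : Type where
  | path (k : ℕ)
  | tree (j i : ℕ) (p : List Bool)
  | spine (j i k t e s : ℕ)
deriving DecidableEq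

/-- `N = 2^{h+1} - 1`, the number of copies of `G_{h,d,m-1}` glued inside `G_{h,d,m}`. -/
def NN (h : ℕ) : ℕ := 2 ^ (h + 1) - 1

/-- Canonical representative of a raw vertex code: all tree roots are identified with the
single root `tree m 1 []`, and the leftmost leaf of tree `i > 1` is identified with the
rightmost leaf of tree `i - 1` (consecutive copies are glued along these leaves). -/
def canon (h m : ℕ) : Raw → Raw
  | .tree j i p =>
    if p = [] then .tree m 1 []
    else if p = List.replicate h false ∧ 1 < i then .tree j (i - 1) (List.replicate h true)
    else .tree j i p
  | x => x

/-- The `q`-bit binary representation of `i` (most significant bit first);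
`false` means "left". -/
def natToBits (q i : ℕ) : List Bool := (List.range q).map fun a => Nat.testBit i (q - 1 - a)

/-- Position of the `k`-th leaf (1-based, from the left) in a binary tree of height `h`. -/
def leafPos (h k : ℕ) : List Bool := natToBits h (k - 1)

/-- The `e`-th element of the `g`-th gluing set `V^{jv}_g` (at level `jv`):
its element `e = 1` is an anchor of the base path, and its element `e ≥ 2` is a shared
extreme leaf of the trees at level `e`. -/
def VsetElem (h d jv g e : ℕ) : Raw :=
  if e = 1 then .path ((g - 1) * NN h ^ (jv - 1) * (d + 1))
  else if (g - 1) * NN h ^ (jv - e) = 0 then .tree e 1 (List.replicate h false)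
  else .tree e ((g - 1) * NN h ^ (jv - e)) (List.replicate h true)

/-- Valid (canonical) vertex codes of `G_{h,d,m}`. -/
def Valid (h d m : ℕ) : Raw → Prop
  | .path k => k ≤ (d + 1) * NN h ^ (m - 1)
  | .tree j i p => 2 ≤ j ∧ j ≤ m ∧ 1 ≤ i ∧ i ≤ NN h ^ (m - j) ∧ p.length ≤ h ∧
      (p = [] → j = m ∧ i = 1) ∧ (p = List.replicate h false → p ≠ [] → i = 1)
  | .spine j i k t e s => 2 ≤ j ∧ j ≤ m ∧ 1 ≤ i ∧ i ≤ NN h ^ (m - j) ∧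
      1 ≤ k ∧ k ≤ 2 ^ h ∧ (t = 2 * k - 2 ∨ t = 2 * k + 1) ∧ 1 ≤ t ∧ t ≤ 2 ^ (h + 1) ∧
      1 ≤ e ∧ e ≤ j - 1 ∧ 1 ≤ s ∧ s ≤ d

/-- Generating adjacencies between raw vertex codes: consecutive base path vertices,
parent/child in the binary trees, consecutive spine vertices, a spine and the leaf it
starts at, a spine and the gluing-set vertex it ends at (the latter collapsed to a single
edge when `d = 0`). -/
inductive rawAdj (h d : ℕ) : Raw → Raw → Prop
  | base (k : ℕ) : rawAdj h d (.path k) (.path (k + 1))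
  | child (j i : ℕ) (p : List Bool) (b : Bool) : p.length < h →
      rawAdj h d (.tree j i p) (.tree j i (p ++ [b]))
  | step (j i k t e s : ℕ) : rawAdj h d (.spine j i k t e s) (.spine j i k t e (s + 1))
  | toLeaf (j i k t e : ℕ) : rawAdj h d (.tree j i (leafPos h k)) (.spine j i k t e 1)
  | toV (j i k t e : ℕ) :
      rawAdj h d (.spine j i k t e d) (VsetElem h d (j - 1) ((i - 1) * NN h + t) e)
  | short (j i k t e : ℕ) : d = 0 → 1 ≤ k → k ≤ 2 ^ h → (t = 2 * k - 2 ∨ t = 2 * k + 1) →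
      1 ≤ t → t ≤ 2 ^ (h + 1) → 1 ≤ e → e ≤ j - 1 →
      rawAdj h d (.tree j i (leafPos h k)) (VsetElem h d (j - 1) ((i - 1) * NN h + t) e)

/-- Adjacency of canonical representatives. -/
def rel (h d m : ℕ) (x y : Raw) : Prop :=
  ∃ a b, rawAdj h d a b ∧ x = canon h m a ∧ y = canon h m b

/-- The vertex set of `G_{h,d,m}`. -/
def Verts (h d m : ℕ) : Set Raw := {x | Valid h d m x}

/-- The graph `G_{h,d,m}`. -/
def G (h d m : ℕ) : SimpleGraph (Verts h d m) :=
  (SimpleGraph.fromRel (rel h d m)).induce (Verts h d m)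

/-- Lift a set of raw codes to a set of vertices of `G_{h,d,m}`. -/
def lift {h d m : ℕ} (S : Set Raw) : Set (Verts h d m) := Subtype.val ⁻¹' S

/-- The root `R(G_{h,d,m})`. -/
def RootR (m : ℕ) : Raw := .tree m 1 []

/-- The gluing set `V^{jv}_g` of `G_{h,d,m}`, as a set of raw codes. -/
def VsetRaw (h d m jv g : ℕ) : Set Raw :=
  {x | ∃ e, 1 ≤ e ∧ e ≤ jv ∧ x = canon h m (VsetElem h d jv g e)}

/-- The set `S(G_{h,d,m})`. -/
def SsetR (h d m : ℕ) : Set Raw :=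
  VsetRaw h d m (m - 1) 1 ∪ {canon h m (.tree m 1 (leafPos h 1))}

/-- The set `T(G_{h,d,m})`. -/
def TsetR (h d m : ℕ) : Set Raw :=
  VsetRaw h d m (m - 1) (2 ^ (h + 1)) ∪ {canon h m (.tree m 1 (leafPos h (2 ^ h)))}

/-- For a vertex of the top binary tree at position `p`, the (1-based) index of the
leftmost leaf of the top tree below it. -/
def kOf (h : ℕ) (p : List Bool) : ℕ :=
  (p.foldl (fun a b => 2 * a + if b then 1 else 0) 0) * 2 ^ (h - p.length) + 1

/-- `S(Δ(x))` for the vertex `x` of the top binary tree `B(G_{h,d,m})` at position `p`. -/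
def SDeltaR (h d m : ℕ) (p : List Bool) : Set Raw :=
  VsetRaw h d m (m - 1) (2 * kOf h p - 1) ∪ {canon h m (.tree m 1 (leafPos h (kOf h p)))}

/-- The leaf of `B(G_{h,d,m})` immediately to the left of the leftmost leaf below the
top-tree vertex at position `p`; it is the unique leaf joined by spines to `S(Δ(x))`. -/
def leafLeftR (h m : ℕ) (p : List Bool) : Raw :=
  canon h m (.tree m 1 (leafPos h (kOf h p - 1)))

end Ghdm

theorem reach_aux {V : Type*} (G : SimpleGraph V) (U : Set V) (r : ℕ) {a b : V} (ha : a ∈ U)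
    (h : G.edist a b ≤ (r : ℕ∞)) (ha' : a ∈ CGT.gBall G U r) (hb : b ∈ CGT.gBall G U r) :
    (G.induce (CGT.gBall G U r)).Reachable ⟨a, ha'⟩ ⟨b, hb⟩ := by
  classical
  have hne : G.edist a b ≠ ⊤ := fun e => by
    rw [e] at h
    exact absurd h (by simp)
  obtain ⟨p, hp⟩ := SimpleGraph.exists_walk_of_edist_ne_top hne
  have key : ∀ x ∈ p.support, x ∈ CGT.gBall G U r := by
    intro x hx
    refine ⟨a, ha, ?_⟩
    refine (SimpleGraph.edist_le (p.takeUntil x hx)).trans (le_trans ?_ h)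
    rw [← hp]
    exact_mod_cast p.length_takeUntil_le hx
  exact ⟨p.induce _ key⟩

/-- quasi-isometric preimages of connected sets, fattened by `M(3A+1)`,
are connected. -/
theorem statement2 {V V' : Type*} (M A : ℕ) (hM : 1 ≤ M)
    (G : SimpleGraph V) (H : SimpleGraph V') (hG : G.Connected) (hH : H.Connected)
    (f : V → V') (hf : CGT.IsQI M A G H f)
    (W : Set V') (hW : CGT.SetConn H W)
    (u : V' → V) (hu : ∀ w ∈ W, H.edist (f (u w)) w ≤ (A : ℕ∞)) :
    CGT.SetConn G (CGT.gBall G (u '' W) (M * (3 * A + 1))) := by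
  have hmem : ∀ w ∈ W, u w ∈ CGT.gBall G (u '' W) (M * (3 * A + 1)) := fun w hw =>
    ⟨u w, ⟨w, hw, rfl⟩, by simp⟩
  have hadj : ∀ w ∈ W, ∀ w' ∈ W, H.Adj w w' →
      G.edist (u w) (u w') ≤ ((M * (3 * A + 1) : ℕ) : ℕ∞) := by
    intro w hw w' hw' h
    have h1 : H.edist (f (u w)) (f (u w')) ≤ ((2 * A + 1 : ℕ) : ℕ∞) := by
      have e1 := hu w hw
      have e2 := hu w' hw'
      rw [SimpleGraph.edist_comm] at e2
      have e3 : H.edist w w' ≤ 1 := (SimpleGraph.edist_eq_one_iff_adj.2 h).le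
      calc H.edist (f (u w)) (f (u w')) ≤ H.edist (f (u w)) w + H.edist w (f (u w')) :=
            SimpleGraph.edist_triangle
        _ ≤ H.edist (f (u w)) w + (H.edist w w' + H.edist w' (f (u w'))) := by
            gcongr
            exact SimpleGraph.edist_triangle
        _ ≤ (A : ℕ∞) + (1 + (A : ℕ∞)) := by gcongr
        _ = ((2 * A + 1 : ℕ) : ℕ∞) := by push_cast; ring
    calc G.edist (u w) (u w') ≤ _ := hf.lower _ _
      _ ≤ (M : ℕ∞) * ((2 * A + 1 : ℕ) : ℕ∞) + (M : ℕ∞) * (A : ℕ∞) := by gcongr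
      _ = _ := by push_cast; ring
  have hreach : ∀ w w' : W, (G.induce (CGT.gBall G (u '' W) (M * (3 * A + 1)))).Reachable
      ⟨u w, hmem w w.2⟩ ⟨u w', hmem w' w'.2⟩ := by
    intro w w'
    obtain ⟨p⟩ := hW.preconnected w w'
    induction p with
    | nil => exact SimpleGraph.Reachable.refl _
    | cons h p ih =>
      refine SimpleGraph.Reachable.trans ?_ ih
      exact reach_aux G (u '' W) _ (Set.mem_image_of_mem u (Subtype.property _))
        (hadj _ (Subtype.property _) _ (Subtype.property _) h) _ _
  obtain ⟨w0⟩ := hW.nonempty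
  have : Nonempty (CGT.gBall G (u '' W) (M * (3 * A + 1))) := ⟨⟨u w0, hmem w0 w0.2⟩⟩
  refine ⟨?_⟩
  rintro ⟨x, _, ⟨w, hw, rfl⟩, hx⟩ ⟨y, _, ⟨w', hw', rfl⟩, hy⟩
  have r1 := reach_aux G (u '' W) _ ⟨w, hw, rfl⟩ hx (hmem w hw) ⟨_, ⟨w, hw, rfl⟩, hx⟩
  have r2 := reach_aux G (u '' W) _ ⟨w', hw', rfl⟩ hy (hmem w' hw') ⟨_, ⟨w', hw', rfl⟩, hy⟩
  exact (r1.symm.trans (hreach ⟨w, hw⟩ ⟨w', hw'⟩)).trans r2
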